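/- Let G be a group generated by a finite set S and let 𝓗 = {H_1,…,H_l} be a finite collection of stable subgroups of G. Then 𝓗 has bounded packing in G. -/

import Mathlib

open Pointwise

section BasicDefs

variable {G : Type*} [Group G]

/-- The word length of `g` with respect to the generating set `S`
(words use letters from `S ∪ S⁻¹`). -/
noncomputable def wordLength (S : Set G) (g : G) : ℕ :=
  sInf {n : ℕ | ∃ l : List G, l.length = n ∧ (∀ x ∈ l, x ∈ S ∨ x⁻¹ ∈ S) ∧ l.prod = g}

/-- The word metric on `G` with respect to the generating set `S`. -/
noncomputable def wordDist (S : Set G) (g h : G) : ℝ :=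
  (wordLength S (g⁻¹ * h) : ℝ)

/-- The closed `r`-neighborhood of a subset `A` with respect to the word metric `d_S`. -/
def nbhd (S : Set G) (r : ℝ) (A : Set G) : Set G :=
  {g : G | ∃ a ∈ A, wordDist S g a ≤ r}

/-- The distance between two subsets: the infimum of distances between their elements. -/
noncomputable def setDist (S : Set G) (A B : Set G) : ℝ :=
  sInf {r : ℝ | ∃ a ∈ A, ∃ b ∈ B, r = wordDist S a b}

/-- The conjugate subgroup `H^g = g H g⁻¹`. -/
def conjSub (g : G) (H : Subgroup G) : Subgroup G :=
  H.map (MulAut.conj g).toMonoidHom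

end BasicDefs

/-- `γ` restricted to `{0, …, n}` is a `(K, ε)`-quasigeodesic for the distance function `d`. -/
def IsQuasigeodesic {α : Type*} (d : α → α → ℝ) (K ε : ℝ) (n : ℕ) (γ : ℕ → α) : Prop :=
  ∀ i j : ℕ, i ≤ n → j ≤ n →
    (1 / K) * |(i : ℝ) - (j : ℝ)| - ε ≤ d (γ i) (γ j) ∧
      d (γ i) (γ j) ≤ K * |(i : ℝ) - (j : ℝ)| + ε

/-- `γ` restricted to `{0, …, n}` is a geodesic for the distance function `d`. -/
def IsGeodesic {α : Type*} (d : α → α → ℝ) (n : ℕ) (γ : ℕ → α) : Prop :=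
  ∀ i j : ℕ, i ≤ n → j ≤ n → d (γ i) (γ j) = |(i : ℝ) - (j : ℝ)|

/-- The path `γ` (on `{0, …, n}`) is `f`-stable: every `(K, ε)`-quasigeodesic with endpoints
on `γ` stays in the `f K ε`-neighborhood of `γ`. -/
def IsStablePath {α : Type*} (d : α → α → ℝ) (f : ℝ → ℝ → ℝ) (n : ℕ) (γ : ℕ → α) : Prop :=
  ∀ K ε : ℝ, 1 ≤ K → 0 ≤ ε → ∀ (m : ℕ) (η : ℕ → α),
    IsQuasigeodesic d K ε m η →
    (∃ i ≤ n, η 0 = γ i) → (∃ i ≤ n, η m = γ i) →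
    ∀ j ≤ m, ∃ i ≤ n, d (η j) (γ i) ≤ f K ε

/-- The Gromov product `⟨x, y⟩_w` with respect to a distance function `d`. -/
noncomputable def gromovProd {α : Type*} (d : α → α → ℝ) (w x y : α) : ℝ :=
  (d w x + d w y - d x y) / 2

/-- Gromov hyperbolicity of a distance function, via the four-point condition. -/
def IsHyperbolicDist {α : Type*} (d : α → α → ℝ) : Prop :=
  ∃ δ : ℝ, 0 ≤ δ ∧ ∀ w x y z : α,
    min (gromovProd d w x y) (gromovProd d w y z) - δ ≤ gromovProd d w x z

section GroupDefs

variable {G : Type*} [Group G]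

/-- `H` is a stable subgroup of `(G, d_S)` with stability function `f`: `H` has a finite
generating set `T` such that the inclusion `(H, d_T) → (G, d_S)` is a quasi-isometric
embedding sending every `d_T`-geodesic to an `f`-stable quasigeodesic of `(G, d_S)`. -/
def IsStableSubgroupWith (S : Set G) (H : Subgroup G) (f : ℝ → ℝ → ℝ) : Prop :=
  ∃ T : Set H, T.Finite ∧ Subgroup.closure T = ⊤ ∧
    (∃ μ c : ℝ, 1 ≤ μ ∧ 0 ≤ c ∧ ∀ h₁ h₂ : H,
      (1 / μ) * wordDist T h₁ h₂ - c ≤ wordDist S (h₁ : G) (h₂ : G) ∧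
        wordDist S (h₁ : G) (h₂ : G) ≤ μ * wordDist T h₁ h₂ + c) ∧
    ∀ (n : ℕ) (γ : ℕ → H), IsGeodesic (wordDist T) n γ →
      (∃ K ε : ℝ, 1 ≤ K ∧ 0 ≤ ε ∧
        IsQuasigeodesic (wordDist S) K ε n (fun i => (γ i : G))) ∧
      IsStablePath (wordDist S) f n (fun i => (γ i : G))

/-- `H` is a stable subgroup of `(G, d_S)`. -/
def IsStableSubgroup (S : Set G) (H : Subgroup G) : Prop :=
  ∃ f : ℝ → ℝ → ℝ, IsStableSubgroupWith S H f

/-- The family `Q` of subgroups is hyperbolically embedded in `(G, X)`: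
(Q1) geometric separation, (Q2) finite generation, (Q3) uniform quasi-isometric embedding. -/
def IsHypEmbFamily {G : Type*} [Group G] {ι : Type*} (X : Set G) (Q : ι → Subgroup G) : Prop :=
  (∀ ε : ℝ, 0 < ε → ∃ R : ℝ, ∀ (g : G) (i j : ι),
      (∃ a ∈ (Q i : Set G) ∩ nbhd X ε (g • (Q j : Set G)),
        ∃ b ∈ (Q i : Set G) ∩ nbhd X ε (g • (Q j : Set G)), R ≤ wordDist X a b) →
      i = j ∧ g ∈ Q i) ∧
  ∃ Y : ι → Set G, (∀ i, (Y i).Finite ∧ Y i ⊆ (Q i : Set G) ∧ Subgroup.closure (Y i) = Q i) ∧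
    ∃ μ c : ℝ, 1 ≤ μ ∧ 0 ≤ c ∧ ∀ i : ι, ∀ h ∈ Q i,
      (wordLength (Y i) h : ℝ) ≤ μ * (wordLength X h : ℝ) + c

/-- The subset `H` of `G` satisfies the WPD condition in `(G, X)`. -/
def WPDSet (X : Set G) (H : Set G) : Prop :=
  ∀ ε : ℝ, 0 < ε → ∃ N : ℝ, 0 < N ∧ ∀ h₁ h₂ : G, h₁ ∈ H → h₂ ∈ H →
    N < wordDist X h₁ h₂ →
    {g : G | wordDist X h₁ (g * h₁) < ε ∧ wordDist X h₂ (g * h₂) < ε}.Finite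

/-- A quasimorphism on `G`. -/
def IsQuasimorphism (q : G → ℝ) : Prop :=
  ∃ D : ℝ, 0 ≤ D ∧ ∀ x y : G, |q (x * y) - q x - q y| ≤ D

/-- A homogeneous quasimorphism on `G`. -/
def IsHomogeneousQM (q : G → ℝ) : Prop :=
  IsQuasimorphism q ∧ ∀ (x : G) (n : ℕ), q (x ^ n) = (n : ℝ) * q x

/-- `H` is a quasiconvex subgroup of `(G, d_S)`: every geodesic with endpoints in `H`
lies in a uniformly bounded neighborhood of `H`. -/
def IsQuasiconvex (S : Set G) (H : Subgroup G) : Prop :=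
  ∃ C : ℝ, 0 ≤ C ∧ ∀ (n : ℕ) (γ : ℕ → G), IsGeodesic (wordDist S) n γ →
    γ 0 ∈ H → γ n ∈ H → ∀ i ≤ n, ∃ h ∈ H, wordDist S (γ i) h ≤ C

end GroupDefs

/-!
All cosets of the finitely many stable subgroups are stable subsets of the word metric, with common
constants. Such subsets have a Helly property: if finitely many of them are pairwise `D`-close, then
a single point is uniformly close to all of them, whatever their number. To find it, fix a point `z`
in one of them, `B`, and let `a i` be a point of the `i`-th set nearest to `z`. A geodesic from `z`
to `a i` followed by a stable path inside the set is a quasigeodesic, because `a i` is nearest. Take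
`a k` farthest from `z`. For every `j` some point `p` of `B` is close to both the `k`-th and the
`j`-th set, and both `a k` and `a j` are then close to a stable path from `z` to `p`. If `a k` comes
first along this path, it is close to `a j`, being at least as far from `z`; if `a j` comes first,
the path stays close to the `j`-th set from `a j` on, so that `a k` is close to it.

Since balls in the word metric are finite, only boundedly many cosets meet a given ball, and hence
only boundedly many can be pairwise `D`-close.
-/

theorem exists_pred_and {P Q : ℕ → Prop} {m : ℕ} (hP : P 0) (hQ : Q m)
    (hPQ : ∀ k ≤ m, P k ∨ Q k) : ∃ k ≤ m, P (k - 1) ∧ Q k := by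
  classical
  have hex : ∃ k, Q k := ⟨m, hQ⟩
  have hle : Nat.find hex ≤ m := Nat.find_min' hex hQ
  refine ⟨Nat.find hex, hle, ?_, Nat.find_spec hex⟩
  rcases Nat.eq_zero_or_pos (Nat.find hex) with hk | hk
  · rwa [hk]
  · exact (hPQ _ (by omega)).resolve_right (Nat.find_min hex (Nat.sub_one_lt_of_lt hk))

theorem IsGeodesic.isQuasigeodesic {α : Type*} {d : α → α → ℝ} {n : ℕ} {γ : ℕ → α}
    (hγ : IsGeodesic d n γ) : IsQuasigeodesic d 1 0 n γ := fun i j hi hj => by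
  simp [hγ i j hi hj]

theorem IsGeodesic.eq_sub {α : Type*} {d : α → α → ℝ} {n i j : ℕ} {γ : ℕ → α}
    (hγ : IsGeodesic d n γ) (hij : i ≤ j) (hj : j ≤ n) : d (γ i) (γ j) = (j : ℝ) - i := by
  have hij' : (i : ℝ) ≤ j := Nat.cast_le.2 hij
  rw [hγ i j (hij.trans hj) hj, abs_sub_comm, abs_of_nonneg (sub_nonneg.2 hij')]

theorem IsQuasigeodesic.mono {α : Type*} {d : α → α → ℝ} {K K' ε ε' : ℝ} {n : ℕ} {γ : ℕ → α}
    (hK : 0 < K) (hKK' : K ≤ K') (hεε' : ε ≤ ε') (hγ : IsQuasigeodesic d K ε n γ) :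
    IsQuasigeodesic d K' ε' n γ := fun i j hi hj => by
  obtain ⟨hlower, hupper⟩ := hγ i j hi hj
  constructor
  · exact le_trans (by gcongr) hlower
  · exact hupper.trans (by gcongr)

theorem IsQuasigeodesic.tail {α : Type*} {d : α → α → ℝ} {K ε : ℝ} {n t : ℕ} {γ : ℕ → α}
    (hγ : IsQuasigeodesic d K ε n γ) (ht : t ≤ n) :
    IsQuasigeodesic d K ε (n - t) (fun i => γ (t + i)) := fun i j hi hj => by
  simpa using hγ (t + i) (t + j) (by omega) (by omega)

theorem IsStablePath.stability_nonneg {α : Type*} [PseudoMetricSpace α] {f : ℝ → ℝ → ℝ} {K ε : ℝ}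
    {n : ℕ} {γ : ℕ → α} (hγ : IsStablePath dist f n γ) (hK : 1 ≤ K) (hε : 0 ≤ ε) :
    0 ≤ f K ε := by
  have hconst : IsQuasigeodesic dist K ε 0 (fun _ => γ 0) := fun i j hi hj => by
    simp [Nat.le_zero.1 hi, Nat.le_zero.1 hj, hε]
  obtain ⟨i, -, hi⟩ := hγ K ε hK hε 0 _ hconst ⟨0, zero_le, rfl⟩ ⟨0, zero_le, rfl⟩ 0 le_rfl
  exact dist_nonneg.trans hi

/-- A space is discretely geodesic if any two points are joined by a geodesic parametrised by
`{0, …, n}`, like the vertex set of a connected graph. In particular `d` is `ℕ`-valued. -/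
def IsDiscretelyGeodesic {α : Type*} (d : α → α → ℝ) : Prop :=
  ∀ x y, ∃ (n : ℕ) (γ : ℕ → α), γ 0 = x ∧ γ n = y ∧ IsGeodesic d n γ

theorem IsDiscretelyGeodesic.exists_eq_natCast {α : Type*} {d : α → α → ℝ}
    (hd : IsDiscretelyGeodesic d) (x y : α) : ∃ n : ℕ, d x y = n := by
  obtain ⟨n, γ, rfl, rfl, hγ⟩ := hd x y
  exact ⟨n, by simpa using hγ.eq_sub zero_le le_rfl⟩

theorem IsDiscretelyGeodesic.exists_isMinOn {α : Type*} {d : α → α → ℝ}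
    (hd : IsDiscretelyGeodesic d) {A : Set α} (hA : A.Nonempty) (x : α) :
    ∃ a ∈ A, IsMinOn (d x) A a := by
  choose N hN using hd.exists_eq_natCast
  refine ⟨Function.argminOn (N x) A hA, Function.argminOn_mem (N x) A hA, fun b hb => ?_⟩
  simpa [hN] using Function.argminOn_le (N x) A hb

/-- A subset `A` is stable if any two of its points are joined inside `A` by an `f`-stable
`(K, ε)`-quasigeodesic, with `f`, `K` and `ε` uniform. -/
def IsStableSubset {α : Type*} (d : α → α → ℝ) (f : ℝ → ℝ → ℝ) (K ε : ℝ) (A : Set α) : Prop :=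
  ∀ x ∈ A, ∀ y ∈ A, ∃ (n : ℕ) (γ : ℕ → α), γ 0 = x ∧ γ n = y ∧ (∀ i ≤ n, γ i ∈ A) ∧
    IsQuasigeodesic d K ε n γ ∧ IsStablePath d f n γ

theorem IsStablePath.mono {α : Type*} {d : α → α → ℝ} {f f' : ℝ → ℝ → ℝ} {n : ℕ} {γ : ℕ → α}
    (hff' : f ≤ f') (hγ : IsStablePath d f n γ) : IsStablePath d f' n γ :=
  fun K ε hK hε m η hη h₀ hm j hj =>
    let ⟨i, hi, hij⟩ := hγ K ε hK hε m η hη h₀ hm j hj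
    ⟨i, hi, hij.trans (hff' K ε)⟩

theorem IsStableSubset.mono {α : Type*} {d : α → α → ℝ} {f f' : ℝ → ℝ → ℝ} {K K' ε ε' : ℝ}
    {A : Set α} (hff' : f ≤ f') (hK : 0 < K) (hKK' : K ≤ K') (hεε' : ε ≤ ε')
    (hA : IsStableSubset d f K ε A) : IsStableSubset d f' K' ε' A := fun x hx y hy =>
  let ⟨n, γ, hγ₀, hγn, hγA, hγ, hγf⟩ := hA x hx y hy
  ⟨n, γ, hγ₀, hγn, hγA, hγ.mono hK hKK' hεε', hγf.mono hff'⟩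

section Action

variable {M α : Type*} [Group M] [MulAction M α] {d : α → α → ℝ}

theorem IsQuasigeodesic.smul {K ε : ℝ} {n : ℕ} {γ : ℕ → α}
    (hd : ∀ (g : M) (x y : α), d (g • x) (g • y) = d x y)
    (hγ : IsQuasigeodesic d K ε n γ) (g : M) :
    IsQuasigeodesic d K ε n (fun i => g • γ i) := fun i j hi hj => by
  simpa only [hd] using hγ i j hi hj

theorem IsStablePath.smul {f : ℝ → ℝ → ℝ} {n : ℕ} {γ : ℕ → α}
    (hd : ∀ (g : M) (x y : α), d (g • x) (g • y) = d x y)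
    (hγ : IsStablePath d f n γ) (g : M) : IsStablePath d f n (fun i => g • γ i) := by
  rintro K ε hK hε m η hη ⟨i₀, hi₀, h₀⟩ ⟨iₘ, hiₘ, hₘ⟩ j hj
  obtain ⟨i, hi, hij⟩ := hγ K ε hK hε m (fun k => g⁻¹ • η k) (hη.smul hd g⁻¹)
    ⟨i₀, hi₀, by simp [h₀]⟩ ⟨iₘ, hiₘ, by simp [hₘ]⟩ j hj
  exact ⟨i, hi, by simpa [hd] using (hd g (g⁻¹ • η j) (γ i)).trans_le hij⟩

theorem IsStableSubset.smul {f : ℝ → ℝ → ℝ} {K ε : ℝ} {A : Set α}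
    (hd : ∀ (g : M) (x y : α), d (g • x) (g • y) = d x y)
    (hA : IsStableSubset d f K ε A) (g : M) : IsStableSubset d f K ε (g • A) := by
  rintro _ ⟨x, hx, rfl⟩ _ ⟨y, hy, rfl⟩
  obtain ⟨n, γ, hγ₀, hγn, hγA, hγ, hγf⟩ := hA x hx y hy
  exact ⟨n, fun i => g • γ i, congrArg (g • ·) hγ₀, congrArg (g • ·) hγn,
    fun i hi => Set.smul_mem_smul_set (hγA i hi), hγ.smul hd g, hγf.smul hd g⟩

end Action

/-- The concatenation of `ξ` restricted to `{0, …, m}` with `γ`, intended for `ξ m = γ 0`. -/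
def concatPath {α : Type*} (m : ℕ) (ξ γ : ℕ → α) (k : ℕ) : α := if k ≤ m then ξ k else γ (k - m)

theorem concatPath_of_le {α : Type*} {m k : ℕ} {ξ γ : ℕ → α} (hk : k ≤ m) :
    concatPath m ξ γ k = ξ k :=
  if_pos hk

theorem concatPath_add {α : Type*} {m : ℕ} {ξ γ : ℕ → α} (h : ξ m = γ 0) (k : ℕ) :
    concatPath m ξ γ (m + k) = γ k := by
  rcases Nat.eq_zero_or_pos k with rfl | hk
  · exact (concatPath_of_le le_rfl).trans h
  · rw [concatPath, if_neg (by omega), Nat.add_sub_cancel_left]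

section Metric

variable {α : Type*} [PseudoMetricSpace α] {f : ℝ → ℝ → ℝ} {K ε E : ℝ} {m n : ℕ} {γ η ξ : ℕ → α}

theorem isQuasigeodesic_iff (hK : 0 < K) :
    IsQuasigeodesic dist K ε n γ ↔ ∀ i j : ℕ, i ≤ j → j ≤ n →
      ((j : ℝ) - i ≤ K * (dist (γ i) (γ j) + ε) ∧ dist (γ i) (γ j) ≤ K * ((j : ℝ) - i) + ε) := by
  have hforward : ∀ i j : ℕ, i ≤ j →
      (((1 / K) * |(i : ℝ) - j| - ε ≤ dist (γ i) (γ j) ∧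
        dist (γ i) (γ j) ≤ K * |(i : ℝ) - j| + ε) ↔
      ((j : ℝ) - i ≤ K * (dist (γ i) (γ j) + ε) ∧
        dist (γ i) (γ j) ≤ K * ((j : ℝ) - i) + ε)) := fun i j hij => by
    have hij' : (i : ℝ) ≤ j := Nat.cast_le.2 hij
    rw [abs_sub_comm, abs_of_nonneg (sub_nonneg.2 hij'), sub_le_iff_le_add, one_div,
      inv_mul_le_iff₀ hK]
  refine ⟨fun h i j hij hj => (hforward i j hij).1 (h i j (hij.trans hj) hj),
    fun h i j hi hj => ?_⟩
  rcases le_total i j with hij | hji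
  · exact (hforward i j hij).2 (h i j hij hj)
  · rw [abs_sub_comm, dist_comm]
    exact (hforward j i hji).2 (h j i hji hi)

theorem isGeodesic_of_dist_succ_le (hstep : ∀ i < n, dist (γ i) (γ (i + 1)) ≤ 1)
    (hn : (n : ℝ) ≤ dist (γ 0) (γ n)) : IsGeodesic dist n γ := by
  have hlip : ∀ i j : ℕ, i ≤ j → j ≤ n → dist (γ i) (γ j) ≤ (j : ℝ) - i := fun i j hij hj => by
    simpa [hij] using dist_le_Ico_sum_of_dist_le hij (d := fun _ => 1)
      fun {k} _ hk => hstep k (hk.trans_le hj)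
  have hforward : ∀ i j : ℕ, i ≤ j → j ≤ n → dist (γ i) (γ j) = |(i : ℝ) - j| := by
    intro i j hij hj
    have hij' : (i : ℝ) ≤ j := Nat.cast_le.2 hij
    rw [abs_sub_comm, abs_of_nonneg (sub_nonneg.2 hij')]
    refine (hlip i j hij hj).antisymm ?_
    have hi₀ := hlip 0 i zero_le (hij.trans hj)
    have hjn := hlip j n hj le_rfl
    have := dist_triangle4 (γ 0) (γ i) (γ j) (γ n)
    push_cast at hi₀
    linarith
  intro i j hi hj
  rcases le_total i j with hij | hji
  · exact hforward i j hij hj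
  · rw [dist_comm, abs_sub_comm, hforward j i hji hi]

theorem IsQuasigeodesic.of_dist_le (hη : IsQuasigeodesic dist K ε n η)
    (hηγ : ∀ i ≤ n, dist (η i) (γ i) ≤ E) : IsQuasigeodesic dist K (ε + 2 * E) n γ := by
  intro i j hi hj
  have hdist : |dist (η i) (η j) - dist (γ i) (γ j)| ≤ 2 * E := by
    have := dist_dist_dist_le (η i) (η j) (γ i) (γ j)
    rw [Real.dist_eq] at this
    linarith [hηγ i hi, hηγ j hj]
  obtain ⟨hlower, hupper⟩ := hη i j hi hj
  obtain ⟨h₁, h₂⟩ := abs_le.1 hdist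
  constructor <;> linarith

/-- The neighbourhood of an `f`-stable path that contains every `(K, ε)`-quasigeodesic whose
endpoints are only `E`-close to the path. -/
def stabilityConst (f : ℝ → ℝ → ℝ) (K ε E : ℝ) : ℝ := E + f K (ε + 2 * E)

theorem IsStablePath.le_stabilityConst (hγ : IsStablePath dist f n γ) (hK : 1 ≤ K) (hε : 0 ≤ ε)
    (hE : 0 ≤ E) : E ≤ stabilityConst f K ε E :=
  le_add_of_nonneg_right (hγ.stability_nonneg hK (by linarith))

theorem IsStablePath.exists_dist_le_of_endpoints (hγ : IsStablePath dist f n γ) (hK : 1 ≤ K)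
    (hε : 0 ≤ ε) (hη : IsQuasigeodesic dist K ε m η) (h₀ : ∃ i ≤ n, dist (η 0) (γ i) ≤ E)
    (hₘ : ∃ i ≤ n, dist (η m) (γ i) ≤ E) {k : ℕ} (hk : k ≤ m) :
    ∃ i ≤ n, dist (η k) (γ i) ≤ stabilityConst f K ε E := by
  obtain ⟨i₀, hi₀, h₀⟩ := h₀
  obtain ⟨iₘ, hiₘ, hₘ⟩ := hₘ
  have hE : 0 ≤ E := dist_nonneg.trans h₀
  set η' : ℕ → α := fun k => if k = m then γ iₘ else if k = 0 then γ i₀ else η k with hη'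
  have hclose : ∀ k, dist (η k) (η' k) ≤ E := fun k => by
    simp only [hη']
    split_ifs with hkm hk₀
    · rwa [hkm]
    · rwa [hk₀]
    · rwa [dist_self]
  have hη'₀ : ∃ i ≤ n, η' 0 = γ i := by
    by_cases hm : 0 = m
    · exact ⟨iₘ, hiₘ, if_pos hm⟩
    · exact ⟨i₀, hi₀, by simp [hη', hm]⟩
  obtain ⟨i, hi, hki⟩ := hγ K (ε + 2 * E) hK (by linarith) m η' (hη.of_dist_le fun k _ => hclose k)
    hη'₀ ⟨iₘ, hiₘ, if_pos rfl⟩ k hk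
  exact ⟨i, hi, (dist_triangle _ (η' k) _).trans (add_le_add (hclose k) hki)⟩

theorem IsStableSubset.exists_dist_le_of_endpoints {K' ε' : ℝ} {A : Set α}
    (hA : IsStableSubset dist f K' ε' A) (hK : 1 ≤ K) (hε : 0 ≤ ε)
    (hη : IsQuasigeodesic dist K ε m η) (h₀ : ∃ a ∈ A, dist (η 0) a ≤ E)
    (hₘ : ∃ a ∈ A, dist (η m) a ≤ E) {k : ℕ} (hk : k ≤ m) :
    ∃ a ∈ A, dist (η k) a ≤ stabilityConst f K ε E := by
  obtain ⟨x, hx, hηx⟩ := h₀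
  obtain ⟨y, hy, hηy⟩ := hₘ
  obtain ⟨n, γ, rfl, rfl, hγA, -, hγ⟩ := hA x hx y hy
  obtain ⟨i, hi, hki⟩ := hγ.exists_dist_le_of_endpoints hK hε hη ⟨0, zero_le, hηx⟩
    ⟨n, le_rfl, hηy⟩ hk
  exact ⟨γ i, hγA i hi, hki⟩

theorem dist_le_dist_of_nearest {x p a b : α} (hp : dist x p + dist p a = dist x a)
    (hab : dist x a ≤ dist x b) : dist p a ≤ dist p b := by
  linarith [dist_triangle x p b]

theorem IsGeodesic.isQuasigeodesic_concatPath (hξ : IsGeodesic dist m ξ) (hK : 1 ≤ K) (hε : 0 ≤ ε)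
    (hγ : IsQuasigeodesic dist K ε n γ) (hjoin : ξ m = γ 0)
    (hnearest : ∀ j ≤ n, dist (ξ 0) (γ 0) ≤ dist (ξ 0) (γ j)) :
    IsQuasigeodesic dist (3 * K) ε (m + n) (concatPath m ξ γ) := by
  rw [isQuasigeodesic_iff (by linarith)] at hγ ⊢
  intro i j hij hj
  rcases le_total j m with hjm | hmj
  · rw [concatPath_of_le hjm, concatPath_of_le (hij.trans hjm)]
    have hdist := hξ.eq_sub hij hjm
    have hij' : (i : ℝ) ≤ j := Nat.cast_le.2 hij
    constructor <;> nlinarith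
  obtain ⟨j, rfl⟩ := Nat.exists_eq_add_of_le hmj
  rw [concatPath_add hjoin]
  rcases le_total i m with him | hmi
  · rw [concatPath_of_le him]
    have him' : (i : ℝ) ≤ m := Nat.cast_le.2 him
    have hdist : dist (ξ i) (γ 0) = m - i := hjoin ▸ hξ.eq_sub him le_rfl
    have hsplit : dist (ξ 0) (ξ i) + dist (ξ i) (γ 0) = dist (ξ 0) (γ 0) := by
      rw [hdist, ← hjoin, hξ.eq_sub zero_le him, hξ.eq_sub zero_le le_rfl]
      ring
    have hfar := dist_le_dist_of_nearest hsplit (hnearest j (by omega))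
    have hdouble : dist (γ 0) (γ j) ≤ 2 * dist (ξ i) (γ j) := by
      linarith [dist_triangle_left (γ 0) (γ j) (ξ i)]
    have htri := dist_triangle (ξ i) (γ 0) (γ j)
    obtain ⟨hlower, hupper⟩ := hγ 0 j zero_le (by omega)
    push_cast at hlower hupper ⊢
    constructor <;> nlinarith
  · obtain ⟨i, rfl⟩ := Nat.exists_eq_add_of_le hmi
    rw [concatPath_add hjoin]
    have hij' : (i : ℝ) ≤ j := Nat.cast_le.2 (by omega)
    obtain ⟨hlower, hupper⟩ := hγ i j (by omega) (by omega)
    push_cast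
    constructor <;> nlinarith [dist_nonneg (x := γ i) (y := γ j)]

theorem IsStableSubset.exists_isQuasigeodesic_through_nearest {A : Set α} {x a y : α}
    (hα : IsDiscretelyGeodesic (dist : α → α → ℝ)) (hK : 1 ≤ K) (hε : 0 ≤ ε)
    (hA : IsStableSubset dist f K ε A) (ha : a ∈ A) (hmin : IsMinOn (dist x) A a) (hy : y ∈ A) :
    ∃ (m : ℕ) (η : ℕ → α), η 0 = x ∧ η m = y ∧ (∃ k ≤ m, η k = a) ∧
      IsQuasigeodesic dist (3 * K) ε m η := by
  obtain ⟨m, ξ, rfl, hξm, hξ⟩ := hα x a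
  obtain ⟨n, γ, rfl, rfl, hγA, hγ, -⟩ := hA a ha y hy
  exact ⟨m + n, concatPath m ξ γ, concatPath_of_le zero_le, concatPath_add hξm n,
    ⟨m, m.le_add_right n, concatPath_add hξm 0⟩,
    hξ.isQuasigeodesic_concatPath hK hε hγ hξm fun j hj => isMinOn_iff.1 hmin _ (hγA j hj)⟩

/-- The neighbourhood of a geodesic that contains every `f`-stable `(K, ε)`-quasigeodesic with the
same endpoints. -/
def hausdorffConst (f : ℝ → ℝ → ℝ) (K ε : ℝ) : ℝ :=
  f 1 0 + (K * (K * (2 * f 1 0 + 1 + ε)) + ε)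

theorem IsStablePath.exists_dist_geodesic_le {r s t : ℕ} (hγ : IsStablePath dist f n γ)
    (hK : 1 ≤ K) (hγK : IsQuasigeodesic dist K ε n γ) (hξ : IsGeodesic dist m ξ)
    (hrs : r ≤ s) (hst : s ≤ t) (ht : t ≤ n) (hξ₀ : ξ 0 = γ r) (hξₘ : ξ m = γ t) :
    ∃ k ≤ m, dist (ξ k) (γ s) ≤ hausdorffConst f K ε := by
  have hF : 0 ≤ f 1 0 := hγ.stability_nonneg le_rfl le_rfl
  have hnear := hγ 1 0 le_rfl le_rfl m ξ hξ.isQuasigeodesic ⟨r, by omega, hξ₀⟩ ⟨t, ht, hξₘ⟩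
  -- The points of `ξ` follow `γ`, so between two consecutive ones they pass the parameter `s`.
  obtain ⟨k, hkm, ⟨i, his, hki⟩, j, hj, hsj, hkj⟩ :
      ∃ k ≤ m, (∃ i ≤ s, dist (ξ (k - 1)) (γ i) ≤ f 1 0) ∧
        ∃ j ≤ n, s ≤ j ∧ dist (ξ k) (γ j) ≤ f 1 0 := by
    apply exists_pred_and (P := fun k => ∃ i ≤ s, dist (ξ k) (γ i) ≤ f 1 0)
    · exact ⟨r, hrs, by rwa [hξ₀, dist_self]⟩
    · exact ⟨t, ht, hst, by rwa [hξₘ, dist_self]⟩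
    · intro k hk
      obtain ⟨i, hi, hki⟩ := hnear k hk
      exact (le_total i s).imp (fun his => ⟨i, his, hki⟩) fun hsi => ⟨i, hi, hsi, hki⟩
  have hstep : dist (ξ (k - 1)) (ξ k) ≤ 1 := by
    rw [hξ.eq_sub (Nat.sub_le k 1) hkm, sub_le_iff_le_add']
    exact_mod_cast le_tsub_add
  have hγij : dist (γ i) (γ j) ≤ 2 * f 1 0 + 1 := by
    have := dist_triangle4 (γ i) (ξ (k - 1)) (ξ k) (γ j)
    rw [dist_comm (γ i) (ξ (k - 1))] at this
    linarith
  rw [isQuasigeodesic_iff (by linarith)] at hγK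
  have hsi : (s : ℝ) - i ≤ K * (2 * f 1 0 + 1 + ε) := calc
    (s : ℝ) - i ≤ (j : ℝ) - i := by gcongr
    _ ≤ K * (dist (γ i) (γ j) + ε) := (hγK i j (his.trans hsj) hj).1
    _ ≤ K * (2 * f 1 0 + 1 + ε) := by gcongr
  refine ⟨k - 1, by omega, ?_⟩
  calc dist (ξ (k - 1)) (γ s) ≤ dist (ξ (k - 1)) (γ i) + dist (γ i) (γ s) := dist_triangle _ _ _
    _ ≤ f 1 0 + (K * ((s : ℝ) - i) + ε) := add_le_add hki (hγK i s his (hst.trans ht)).2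
    _ ≤ hausdorffConst f K ε := by unfold hausdorffConst; gcongr

theorem IsStablePath.dist_le_of_dist_le_add {r s t : ℕ}
    (hα : IsDiscretelyGeodesic (dist : α → α → ℝ)) (hγ : IsStablePath dist f n γ) (hK : 1 ≤ K)
    (hγK : IsQuasigeodesic dist K ε n γ) (hrs : r ≤ s) (hst : s ≤ t) (ht : t ≤ n)
    (h : dist (γ r) (γ t) ≤ dist (γ r) (γ s) + E) :
    dist (γ s) (γ t) ≤ E + 2 * hausdorffConst f K ε := by
  obtain ⟨m, ξ, hξ₀, hξₘ, hξ⟩ := hα (γ r) (γ t)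
  obtain ⟨k, hkm, hk⟩ := hγ.exists_dist_geodesic_le hK hγK hξ hrs hst ht hξ₀ hξₘ
  have hsplit : dist (γ r) (γ t) = dist (γ r) (ξ k) + dist (ξ k) (γ t) := by
    rw [← hξ₀, ← hξₘ, hξ.eq_sub zero_le le_rfl, hξ.eq_sub zero_le hkm, hξ.eq_sub hkm le_rfl]
    ring
  have hs := dist_triangle (γ r) (ξ k) (γ s)
  have ht := dist_triangle_left (γ s) (γ t) (ξ k)
  linarith

theorem IsStableSubset.exists_dist_nearest_le {A : Set α} {a : α}
    (hα : IsDiscretelyGeodesic (dist : α → α → ℝ)) (hK : 1 ≤ K) (hε : 0 ≤ ε)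
    (hA : IsStableSubset dist f K ε A) (ha : a ∈ A) (hmin : IsMinOn (dist (γ 0)) A a)
    (hγ : IsStablePath dist f n γ) (hE : 0 ≤ E) (hn : ∃ u ∈ A, dist (γ n) u ≤ E) :
    ∃ s ≤ n, dist a (γ s) ≤ stabilityConst f (3 * K) ε E := by
  obtain ⟨u, hu, hnu⟩ := hn
  obtain ⟨m, η, hη₀, rfl, ⟨k, hk, rfl⟩, hη⟩ :=
    hA.exists_isQuasigeodesic_through_nearest hα hK hε ha hmin hu
  exact hγ.exists_dist_le_of_endpoints (by linarith) hε hη ⟨0, zero_le, by rwa [hη₀, dist_self]⟩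
    ⟨n, le_rfl, by rwa [dist_comm]⟩ hk

theorem IsStableSubset.exists_mem_close_to_both {A₁ A₂ B : Set α} {D : ℝ}
    (hα : IsDiscretelyGeodesic (dist : α → α → ℝ)) (hK : 1 ≤ K) (hε : 0 ≤ ε)
    (hB : IsStableSubset dist f K ε B) (hA₁ : IsStableSubset dist f K ε A₁)
    (hA₂ : IsStableSubset dist f K ε A₂) (hBA₁ : ∃ b ∈ B, ∃ a ∈ A₁, dist b a ≤ D)
    (hBA₂ : ∃ b ∈ B, ∃ a ∈ A₂, dist b a ≤ D) (hA₁A₂ : ∃ a₁ ∈ A₁, ∃ a₂ ∈ A₂, dist a₁ a₂ ≤ D) :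
    ∃ p ∈ B, (∃ a ∈ A₁, dist p a ≤ stabilityConst f (3 * K) ε D) ∧
      ∃ a ∈ A₂, dist p a ≤ stabilityConst f (3 * K) ε D := by
  obtain ⟨b₁, hb₁, hb₁A₁⟩ := hBA₁
  obtain ⟨b₂, hb₂, hb₂A₂⟩ := hBA₂
  obtain ⟨a₁, ha₁, a₂, ha₂, ha⟩ := hA₁A₂
  obtain ⟨p, hp, hmin⟩ := hα.exists_isMinOn ⟨b₁, hb₁⟩ a₁
  have hclose : ∀ A : Set α, IsStableSubset dist f K ε A → (∃ a ∈ A, dist a₁ a ≤ D) →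
      (∃ b ∈ B, ∃ a ∈ A, dist b a ≤ D) →
      ∃ a ∈ A, dist p a ≤ stabilityConst f (3 * K) ε D := by
    rintro A hA ha₁A ⟨b, hb, hbA⟩
    obtain ⟨m, η, rfl, rfl, ⟨k, hk, rfl⟩, hη⟩ :=
      hB.exists_isQuasigeodesic_through_nearest hα hK hε hp hmin hb
    exact hA.exists_dist_le_of_endpoints (by linarith) hε hη ha₁A hbA hk
  refine ⟨p, hp, hclose A₁ hA₁ ⟨a₁, ha₁, ?_⟩ ⟨b₁, hb₁, hb₁A₁⟩,
    hclose A₂ hA₂ ⟨a₂, ha₂, ha⟩ ⟨b₂, hb₂, hb₂A₂⟩⟩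
  exact (dist_self a₁).trans_le (dist_nonneg.trans ha)

/-- The distance from the farther of two nearest-point projections to the other set, when each
projection is `C`-close to a common stable path. -/
noncomputable def projectionConst (f : ℝ → ℝ → ℝ) (K ε C : ℝ) : ℝ :=
  C + max (3 * C + 2 * hausdorffConst f K ε) (stabilityConst f K ε C)

theorem IsStableSubset.exists_dist_le_of_dist_le {A : Set α} {a₁ a₂ : α} {s t : ℕ} {C : ℝ}
    (hα : IsDiscretelyGeodesic (dist : α → α → ℝ)) (hK : 1 ≤ K) (hε : 0 ≤ ε)
    (hA : IsStableSubset dist f K ε A) (hγ : IsStablePath dist f n γ)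
    (hγK : IsQuasigeodesic dist K ε n γ) (hn : ∃ u ∈ A, dist (γ n) u ≤ C) (ha₂ : a₂ ∈ A)
    (hs : s ≤ n) (ht : t ≤ n) (hsa₁ : dist a₁ (γ s) ≤ C) (hta₂ : dist a₂ (γ t) ≤ C)
    (hfar : dist (γ 0) a₂ ≤ dist (γ 0) a₁) :
    ∃ a ∈ A, dist a₁ a ≤ projectionConst f K ε C := by
  suffices ∃ a ∈ A, dist (γ s) a ≤
      max (3 * C + 2 * hausdorffConst f K ε) (stabilityConst f K ε C) by
    obtain ⟨a, ha, hsa⟩ := this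
    exact ⟨a, ha, (dist_triangle _ (γ s) _).trans (add_le_add hsa₁ hsa)⟩
  rcases le_total s t with hst | hts
  · have hback : dist (γ 0) (γ t) ≤ dist (γ 0) (γ s) + 2 * C := by
      linarith [dist_triangle (γ 0) a₂ (γ t), dist_triangle_right (γ 0) a₁ (γ s)]
    have hdist := hγ.dist_le_of_dist_le_add hα hK hγK zero_le hst ht hback
    refine ⟨a₂, ha₂, le_max_of_le_left ?_⟩
    linarith [dist_triangle_right (γ s) a₂ (γ t)]
  · obtain ⟨a, ha, hsa⟩ := hA.exists_dist_le_of_endpoints (E := C) hK hε (hγK.tail ht)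
      ⟨a₂, ha₂, by rwa [add_zero, dist_comm]⟩ (by rwa [Nat.add_sub_cancel' ht])
      (Nat.sub_le_sub_right hs t)
    rw [Nat.add_sub_cancel' hts] at hsa
    exact ⟨a, ha, le_max_of_le_right hsa⟩

/-- The distance from a suitable point to all members of a family of stable subsets at pairwise
distance at most `D`. -/
noncomputable def hellyConst (f : ℝ → ℝ → ℝ) (K ε D : ℝ) : ℝ :=
  projectionConst f K ε (stabilityConst f (3 * K) ε (stabilityConst f (3 * K) ε D))

theorem IsStableSubset.exists_forall_exists_dist_le {ι : Type*} [Finite ι] [Nonempty ι]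
    {A : ι → Set α} {D : ℝ} (hα : IsDiscretelyGeodesic (dist : α → α → ℝ)) (hK : 1 ≤ K)
    (hε : 0 ≤ ε) (hA : ∀ i, IsStableSubset dist f K ε (A i))
    (hclose : ∀ i j, ∃ u ∈ A i, ∃ v ∈ A j, dist u v ≤ D) :
    ∃ w, ∀ i, ∃ a ∈ A i, dist w a ≤ hellyConst f K ε D := by
  obtain ⟨o⟩ := ‹Nonempty ι›
  obtain ⟨z, hz, -⟩ := hclose o o
  choose a ha hmin using fun i => hα.exists_isMinOn (let ⟨u, hu, _⟩ := hclose i i; ⟨u, hu⟩) z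
  obtain ⟨k, hk⟩ := Finite.exists_max fun i => dist z (a i)
  refine ⟨a k, fun j => ?_⟩
  obtain ⟨p, hp, hpk, hpj⟩ := (hA o).exists_mem_close_to_both hα hK hε (hA k) (hA j)
    (hclose o k) (hclose o j) (hclose k j)
  set E := stabilityConst f (3 * K) ε D
  have hE : 0 ≤ E := let ⟨_, _, hpu⟩ := hpk; dist_nonneg.trans hpu
  obtain ⟨n, γ, rfl, rfl, -, hγK, hγ⟩ := hA o z hz p hp
  obtain ⟨s, hs, hsk⟩ := (hA k).exists_dist_nearest_le hα hK hε (ha k) (hmin k) hγ hE hpk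
  obtain ⟨t, ht, htj⟩ := (hA j).exists_dist_nearest_le hα hK hε (ha j) (hmin j) hγ hE hpj
  obtain ⟨u, hu, hnu⟩ := hpj
  exact (hA j).exists_dist_le_of_dist_le hα hK hε hγ hγK
    ⟨u, hu, hnu.trans (hγ.le_stabilityConst (by linarith) hε hE)⟩ (ha j) hs ht hsk htj (hk j)

end Metric

section WordMetric

variable {G : Type*} [Group G] {S : Set G}

theorem wordLength_prod_le {l : List G} (hl : ∀ x ∈ l, x ∈ S ∨ x⁻¹ ∈ S) :
    wordLength S l.prod ≤ l.length :=
  Nat.sInf_le ⟨l, rfl, hl, rfl⟩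

theorem exists_list_length_eq_wordLength (hS : Subgroup.closure S = ⊤) (g : G) :
    ∃ l : List G, l.length = wordLength S g ∧ (∀ x ∈ l, x ∈ S ∨ x⁻¹ ∈ S) ∧ l.prod = g := by
  have hg : g ∈ Submonoid.closure (S ∪ S⁻¹) := by
    rw [← Subgroup.closure_toSubmonoid, hS]
    trivial
  obtain ⟨l, hl, hprod⟩ := Submonoid.exists_list_of_mem_closure hg
  have hne : {n : ℕ | ∃ l : List G, l.length = n ∧ (∀ x ∈ l, x ∈ S ∨ x⁻¹ ∈ S) ∧
      l.prod = g}.Nonempty := ⟨l.length, l, rfl, hl, hprod⟩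
  exact Nat.sInf_mem hne

theorem wordLength_one : wordLength S 1 = 0 :=
  Nat.le_zero.1 (wordLength_prod_le (l := []) (by simp))

theorem wordLength_mul_le (hS : Subgroup.closure S = ⊤) (g h : G) :
    wordLength S (g * h) ≤ wordLength S g + wordLength S h := by
  obtain ⟨l, hlen, hl, rfl⟩ := exists_list_length_eq_wordLength hS g
  obtain ⟨l', hlen', hl', rfl⟩ := exists_list_length_eq_wordLength hS h
  rw [← hlen, ← hlen', ← List.prod_append, ← List.length_append]
  exact wordLength_prod_le (List.forall_mem_append.2 ⟨hl, hl'⟩)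

theorem wordLength_inv (g : G) : wordLength S g⁻¹ = wordLength S g := by
  suffices ∀ (n : ℕ) (g : G),
      (∃ l : List G, l.length = n ∧ (∀ x ∈ l, x ∈ S ∨ x⁻¹ ∈ S) ∧ l.prod = g) →
      ∃ l : List G, l.length = n ∧ (∀ x ∈ l, x ∈ S ∨ x⁻¹ ∈ S) ∧ l.prod = g⁻¹ by
    refine congrArg sInf (Set.ext fun n => ⟨fun h => ?_, this n g⟩)
    simpa using this n g⁻¹ h
  rintro n _ ⟨l, rfl, hl, rfl⟩
  refine ⟨(l.map (·⁻¹)).reverse, by simp, fun x hx => ?_, (List.prod_inv_reverse l).symm⟩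
  have := hl x⁻¹ (by simpa using hx)
  rwa [inv_inv, or_comm] at this

/-- The word length as a group seminorm. -/
noncomputable def wordSeminorm (hS : Subgroup.closure S = ⊤) : GroupSeminorm G where
  toFun g := wordLength S g
  map_one' := by rw [wordLength_one, Nat.cast_zero]
  mul_le' g h := by exact_mod_cast wordLength_mul_le hS g h
  inv' g := by rw [wordLength_inv]

/-- The pseudometric whose distance function is definitionally `wordDist S`. It is not an instance
because it depends on `S`. -/
noncomputable abbrev wordPseudoMetricSpace (hS : Subgroup.closure S = ⊤) : PseudoMetricSpace G :=
  (wordSeminorm hS).toSeminormedGroup.toPseudoMetricSpace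

theorem isDiscretelyGeodesic_wordDist (hS : Subgroup.closure S = ⊤) :
    IsDiscretelyGeodesic (wordDist S) := by
  intro x y
  obtain ⟨l, hlen, hl, hprod⟩ := exists_list_length_eq_wordLength hS (x⁻¹ * y)
  let γ : ℕ → G := fun i => x * (l.take i).prod
  have hγ₀ : γ 0 = x := by simp [γ]
  have hγn : γ l.length = y := by simp [γ, hprod]
  let _ := wordPseudoMetricSpace hS
  refine ⟨l.length, γ, hγ₀, hγn, isGeodesic_of_dist_succ_le (fun i hi => ?_) ?_⟩
  · change (wordLength S ((γ i)⁻¹ * γ (i + 1)) : ℝ) ≤ 1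
    have hletter : (γ i)⁻¹ * γ (i + 1) = [l[i]].prod := by
      simp [γ, List.prod_take_succ l i hi, mul_assoc]
    rw [hletter]
    exact_mod_cast wordLength_prod_le (by simpa using hl _ (l.getElem_mem hi))
  · rw [hγ₀, hγn, hlen]
    exact le_rfl

theorem wordDist_smul (g x y : G) : wordDist S (g • x) (g • y) = wordDist S x y := by
  simp only [wordDist, smul_eq_mul, mul_inv_rev, mul_assoc, inv_mul_cancel_left]

theorem finite_setOf_wordLength_le (hSfin : S.Finite) (hS : Subgroup.closure S = ⊤) (n : ℕ) :
    {g : G | wordLength S g ≤ n}.Finite := by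
  have : Finite ↥(S ∪ S⁻¹) := (hSfin.union hSfin.inv).to_subtype
  refine ((List.finite_length_le ↥(S ∪ S⁻¹) n).image fun l => (l.map (↑)).prod).subset ?_
  intro g hg
  obtain ⟨l, hlen, hl, rfl⟩ := exists_list_length_eq_wordLength hS g
  lift l to List ↥(S ∪ S⁻¹) using hl
  refine ⟨l, ?_, rfl⟩
  rw [List.length_map] at hlen
  exact hlen.trans_le hg

theorem exists_wordDist_lt_of_setDist_lt {A B : Set G} {D : ℝ} (hA : A.Nonempty)
    (hB : B.Nonempty) (h : setDist S A B < D) : ∃ a ∈ A, ∃ b ∈ B, wordDist S a b < D := by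
  obtain ⟨a, ha⟩ := hA
  obtain ⟨b, hb⟩ := hB
  have hne : {r : ℝ | ∃ a ∈ A, ∃ b ∈ B, r = wordDist S a b}.Nonempty := ⟨_, a, ha, b, hb, rfl⟩
  obtain ⟨_, ⟨u, hu, v, hv, rfl⟩, huv⟩ := exists_lt_of_csInf_lt hne h
  exact ⟨u, hu, v, hv, huv⟩

theorem exists_ne_smul_eq_smul_of_wordDist_le {ι : Type*} [Finite ι] (hSfin : S.Finite)
    (hS : Subgroup.closure S = ⊤) (H : ι → Subgroup G) (R : ℝ) :
    ∃ N : ℕ, ∀ (σ : Fin (N + 1) → ι) (g : Fin (N + 1) → G) (w : G),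
      (∀ i, ∃ a ∈ g i • (H (σ i) : Set G), wordDist S w a ≤ R) →
      ∃ i j, i ≠ j ∧ g i • (H (σ i) : Set G) = g j • (H (σ j) : Set G) := by
  have : Finite {x : G | wordLength S x ≤ ⌊R⌋₊} := finite_setOf_wordLength_le hSfin hS _
  have := Fintype.ofFinite (ι × {x : G | wordLength S x ≤ ⌊R⌋₊})
  refine ⟨Fintype.card (ι × {x : G | wordLength S x ≤ ⌊R⌋₊}), fun σ g w hw => ?_⟩
  choose a ha hwa using hw
  obtain ⟨i, j, hij, heq⟩ := Fintype.exists_ne_map_eq_of_card_lt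
    (fun i => (σ i, (⟨w⁻¹ * a i, Nat.le_floor (hwa i)⟩ : {x : G | wordLength S x ≤ ⌊R⌋₊})))
    (by rw [Fintype.card_fin]; exact Nat.lt_succ_self _)
  obtain ⟨hσ, haij⟩ := Prod.mk.inj heq
  have haij : a i = a j := mul_left_cancel (Subtype.mk.inj haij)
  have hcoset : ∀ i, g i • (H (σ i) : Set G) = a i • (H (σ i) : Set G) := fun i =>
    (leftCoset_eq_iff (H (σ i))).2 (mem_leftCoset_iff (g i) |>.1 (ha i))
  exact ⟨i, j, hij, by rw [hcoset i, hcoset j, hσ, haij]⟩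

end WordMetric

section StableSubgroup

variable {G : Type*} [Group G] {S : Set G}

theorem IsStableSubgroupWith.exists_isStableSubset {H : Subgroup G} {f : ℝ → ℝ → ℝ}
    (hH : IsStableSubgroupWith S H f) :
    ∃ K ε : ℝ, 1 ≤ K ∧ IsStableSubset (wordDist S) f K ε (H : Set G) := by
  obtain ⟨T, -, hT, ⟨K, ε, hK, -, hqi⟩, hstable⟩ := hH
  refine ⟨K, ε, hK, fun x hx y hy => ?_⟩
  obtain ⟨n, γ, hγ₀, hγn, hγ⟩ := isDiscretelyGeodesic_wordDist hT ⟨x, hx⟩ ⟨y, hy⟩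
  refine ⟨n, fun i => γ i, congrArg Subtype.val hγ₀, congrArg Subtype.val hγn,
    fun i _ => (γ i).2, fun i j hi hj => ?_, (hstable n γ hγ).2⟩
  simpa only [hγ i j hi hj] using hqi (γ i) (γ j)

theorem exists_forall_isStableSubset_smul {ι : Type*} [Finite ι] {H : ι → Subgroup G}
    (hH : ∀ i, IsStableSubgroup S (H i)) :
    ∃ (f : ℝ → ℝ → ℝ) (K ε : ℝ), 1 ≤ K ∧ 0 ≤ ε ∧
      ∀ (i : ι) (g : G), IsStableSubset (wordDist S) f K ε (g • (H i : Set G)) := by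
  choose f hf using hH
  choose K ε hK hstable using fun i => (hf i).exists_isStableSubset
  obtain ⟨f', hf'⟩ := Finite.exists_le f
  obtain ⟨K', hK'⟩ := Finite.exists_le K
  obtain ⟨ε', hε'⟩ := Finite.exists_le ε
  refine ⟨f', max 1 K', max 0 ε', le_max_left _ _, le_max_left _ _, fun i g => ?_⟩
  exact ((hstable i).mono (hf' i) (by linarith [hK i]) (le_max_of_le_right (hK' i))
    (le_max_of_le_right (hε' i))).smul wordDist_smul g

end StableSubgroup

/-- **Bounded packing for a finite collection of stable subgroups.** -/
theorem bounded_packing_of_stable_family {G : Type*} [Group G] (S : Set G) (hSfin : S.Finite)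
    (hSgen : Subgroup.closure S = ⊤) (l : ℕ) (H : Fin l → Subgroup G)
    (hstable : ∀ i, IsStableSubgroup S (H i)) :
    ∀ D : ℝ, 0 ≤ D → ∃ N : ℕ, ∀ (σ : Fin N → Fin l) (g : Fin N → G),
      (∀ i j : Fin N, i ≠ j → g i • (H (σ i) : Set G) ≠ g j • (H (σ j) : Set G)) →
      ∃ i j : Fin N, i ≠ j ∧
        D ≤ setDist S (g i • (H (σ i) : Set G)) (g j • (H (σ j) : Set G)) := by
  intro D hD
  obtain ⟨f, K, ε, hK, hε, hA⟩ := exists_forall_isStableSubset_smul hstable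
  obtain ⟨N, hN⟩ := exists_ne_smul_eq_smul_of_wordDist_le hSfin hSgen H (hellyConst f K ε D)
  refine ⟨N + 1, fun σ g hne => ?_⟩
  by_contra! hclose
  have hnonempty : ∀ i, (g i • (H (σ i) : Set G)).Nonempty := fun i =>
    (OneMemClass.coe_nonempty (H (σ i))).smul_set
  let _ := wordPseudoMetricSpace hSgen
  have hdist : ∀ i j, ∃ u ∈ g i • (H (σ i) : Set G), ∃ v ∈ g j • (H (σ j) : Set G),
      dist u v ≤ D := fun i j => by
    rcases eq_or_ne i j with rfl | hij
    · obtain ⟨u, hu⟩ := hnonempty i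
      exact ⟨u, hu, u, hu, (dist_self u).trans_le hD⟩
    · obtain ⟨u, hu, v, hv, huv⟩ :=
        exists_wordDist_lt_of_setDist_lt (hnonempty i) (hnonempty j) (hclose i j hij)
      exact ⟨u, hu, v, hv, huv.le⟩
  obtain ⟨w, hw⟩ := IsStableSubset.exists_forall_exists_dist_le
    (isDiscretelyGeodesic_wordDist hSgen) hK hε (fun i => hA (σ i) (g i)) hdist
  obtain ⟨i, j, hij, heq⟩ := hN σ g w hw
  exact hne i j hij heq
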